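/- arXiv:2212.11836 — 8 statements merged into one kernel-verified Lean document; each statement's English description precedes it below -/
import Mathlib

section
/- Let A be a commutative ℂ-algebra, let D_Y : A → A be a ℂ-linear derivation, and let 𝒱 be a ℂ-vector space of ℂ-linear derivations of A that is normalized by D_Y, i.e. for every D_W ∈ 𝒱 the commutator [D_W, D_Y] again belongs to 𝒱. Let m be a radical ideal of A that contains the image D_W(A) for every D_W ∈ 𝒱, and let I be the ideal of A generated by the union of the images D_W(A) over all D_W ∈ 𝒱. Then for every f ∈ √I one has D_Y(f) ∈ m. -/
theorem aux_pow_mem {A : Type*} [CommRing A] [Algebra ℂ A]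
    (D : Derivation ℂ A A) (I : Ideal A) (hI : ∀ x ∈ I, D x ∈ I) (f : A) (j : ℕ) :
    ∀ e : ℕ, f ^ j * (D f) ^ e ∈ I → ∃ n : ℕ, (D f) ^ n ∈ I := by
  induction j with
  | zero => intro e h; exact ⟨e, by simpa using h⟩
  | succ j ih =>
    intro e h
    apply ih (e + 2)
    have h1 : f ^ (j + 1) * (D f) ^ (e + 1) ∈ I := by
      have := I.mul_mem_right (D f) h
      rwa [mul_assoc, ← pow_succ] at this
    have h2 := hI _ h1
    rw [Derivation.leibniz, Derivation.leibniz_pow, Derivation.leibniz_pow] at h2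
    simp only [smul_eq_mul, nsmul_eq_mul, Nat.add_sub_cancel] at h2
    have h3 := I.mul_mem_right (((e + 1 : ℕ) : A) * D (D f)) h
    have h4 := I.sub_mem h2 h3
    have h5 : ((j + 1 : ℕ) : A) * (f ^ j * (D f) ^ (e + 2)) ∈ I := by
      convert h4 using 1
      ring
    have h6 := I.mul_mem_left (algebraMap ℂ A (((j + 1 : ℕ) : ℂ)⁻¹)) h5
    rw [← mul_assoc, ← map_natCast (algebraMap ℂ A) (j + 1), ← map_mul,
      inv_mul_cancel₀ (Nat.cast_ne_zero.mpr (Nat.succ_ne_zero j)), map_one, one_mul] at h6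
    exact h6

/-- Let `A` be a commutative `ℂ`-algebra, `DY` a `ℂ`-linear derivation of `A`,
and `V` a `ℂ`-vector space of derivations of `A` normalized by `DY`, i.e. `⁅DW, DY⁆ ∈ V` for
every `DW ∈ V`.  If `m` is a radical ideal of `A` containing the image of every `DW ∈ V`, and
`I` is the ideal generated by the union of these images, then `DY f ∈ m` for every
`f ∈ √I`. -/
theorem derivation_normalizer_maps_radical_into_radical_ideal
    {A : Type*} [CommRing A] [Algebra ℂ A]
    (DY : Derivation ℂ A A) (V : Submodule ℂ (Derivation ℂ A A))
    (hV : ∀ DW ∈ V, ⁅DW, DY⁆ ∈ V)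
    (m : Ideal A) (hm : m.IsRadical)
    (hmV : ∀ DW ∈ V, ∀ a : A, DW a ∈ m)
    (I : Ideal A)
    (hI : I = Ideal.span (⋃ DW ∈ (V : Set (Derivation ℂ A A)), Set.range ⇑DW))
    (f : A) (hf : f ∈ I.radical) :
    DY f ∈ m := by
  have hgen : ∀ DW ∈ V, ∀ a : A, DW a ∈ I := by
    intro DW hW a
    rw [hI]
    exact Ideal.subset_span (Set.mem_biUnion (show DW ∈ (V : Set _) from hW) ⟨a, rfl⟩)
  have hIm : I ≤ m := by
    rw [hI, Ideal.span_le]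
    intro x hx
    simp only [Set.mem_iUnion] at hx
    obtain ⟨DW, hW, a, rfl⟩ := hx
    exact hmV DW hW a
  have hD : ∀ x ∈ I, DY x ∈ I := by
    intro x hx
    have hx' := hx
    rw [hI] at hx'
    refine (Submodule.span_induction (p := fun x _ => x ∈ I ∧ DY x ∈ I) ?_ ?_ ?_ ?_ hx').2
    · intro x hx
      simp only [Set.mem_iUnion] at hx
      obtain ⟨DW, hW, a, rfl⟩ := hx
      refine ⟨hgen DW hW a, ?_⟩
      have h := I.sub_mem (hgen DW hW (DY a)) (hgen _ (hV DW hW) a)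
      rw [Derivation.commutator_apply] at h
      simpa using h
    · simp
    · rintro x y _ _ ⟨h1, h2⟩ ⟨h3, h4⟩
      exact ⟨I.add_mem h1 h3, by rw [map_add]; exact I.add_mem h2 h4⟩
    · rintro a x _ ⟨h1, h2⟩
      refine ⟨I.mul_mem_left a h1, ?_⟩
      rw [smul_eq_mul, Derivation.leibniz]
      exact I.add_mem (I.mul_mem_left _ h2) (I.mul_mem_right _ h1)
  obtain ⟨n, hn⟩ := hf
  obtain ⟨k, hk⟩ := aux_pow_mem DY I hD f n 0 (by simpa using hn)
  exact hm ⟨k, hIm hk⟩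
end

section
/- Let A be a commutative ℂ-algebra, let D_Y : A → A be a ℂ-linear derivation, and let 𝒱 be a ℂ-vector space of ℂ-linear derivations of A such that for every D_W ∈ 𝒱 the commutator [D_W, D_Y] again belongs to 𝒱. Let m be an ideal of A that contains the image D_W(A) for every D_W ∈ 𝒱, and let I be the ideal of A generated by the union of the images D_W(A) over all D_W ∈ 𝒱. Then for every n ≥ 0 the n-fold iterate D_Y^n maps I into m, i.e. D_Y^n(I) ⊆ m. -/
/-- Let `A` be a commutative `ℂ`-algebra, `DY` a `ℂ`-linear derivation of `A`,
and `V` a `ℂ`-vector space of derivations of `A` such that `⁅DW, DY⁆ ∈ V` for every `DW ∈ V`.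
If `m` is an ideal of `A` containing the image of every `DW ∈ V`, and `I` is the ideal
generated by the union of these images, then for every `n ≥ 0` the `n`-fold iterate of `DY`
maps `I` into `m`. -/
theorem derivation_iterate_maps_ideal_into_ideal
    {A : Type*} [CommRing A] [Algebra ℂ A]
    (DY : Derivation ℂ A A) (V : Submodule ℂ (Derivation ℂ A A))
    (hV : ∀ DW ∈ V, ⁅DW, DY⁆ ∈ V)
    (m : Ideal A)
    (hmV : ∀ DW ∈ V, ∀ a : A, DW a ∈ m)
    (I : Ideal A)
    (hI : I = Ideal.span (⋃ DW ∈ (V : Set (Derivation ℂ A A)), Set.range ⇑DW))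
    (n : ℕ) (f : A) (hf : f ∈ I) :
    (⇑DY)^[n] f ∈ m := by
  have hmem : ∀ DW ∈ V, ∀ b : A, DW b ∈ I := by
    intro W hW b
    rw [hI]
    exact Ideal.subset_span (Set.mem_biUnion hW ⟨b, rfl⟩)
  have hIm : I ≤ m := by
    rw [hI, Ideal.span_le]
    intro x hx
    simp only [Set.mem_iUnion] at hx
    obtain ⟨W, hW, b, rfl⟩ := hx
    exact hmV W hW b
  have hstab : ∀ x ∈ I, DY x ∈ I := by
    intro x hx
    have hx' := hx
    rw [hI] at hx'
    clear hx
    induction hx' using Submodule.span_induction with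
    | mem x h =>
      simp only [Set.mem_iUnion] at h
      obtain ⟨W, hW, b, rfl⟩ := h
      have h1 : DY (W b) = W (DY b) - ⁅W, DY⁆ b := by
        rw [Derivation.commutator_apply]; ring
      rw [h1]
      exact I.sub_mem (hmem W hW _) (hmem _ (hV W hW) _)
    | zero => simp
    | add x y hx hy ihx ihy =>
      rw [map_add]
      exact I.add_mem ihx ihy
    | smul a x hx ih =>
      have hx2 : x ∈ I := by rw [hI]; exact hx
      rw [smul_eq_mul, Derivation.leibniz, smul_eq_mul, smul_eq_mul]
      exact I.add_mem (I.mul_mem_left _ ih) (I.mul_mem_right _ hx2)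
  have hit : (⇑DY)^[n] f ∈ I := by
    induction n with
    | zero => exact hf
    | succ k ih => rw [Function.iterate_succ_apply']; exact hstab _ ih
  exact hIm hit
end

section
/- Let A be a commutative ℂ-algebra, let D : A → A be a ℂ-linear derivation, and let m be a radical ideal of A. If f ∈ m and there is an integer k ≥ 1 such that the k-fold iterate satisfies D^k(f^k) ∈ m, then D(f) ∈ m. -/
theorem iterate_pow_mul_sub_mem
    {A : Type*} [CommRing A] [Algebra ℂ A]
    (D : Derivation ℂ A A) (m : Ideal A) (f : A) (hf : f ∈ m) (k : ℕ) :
    ∀ g : A, (⇑D)^[k] (f ^ k * g) - (k.factorial : A) * (D f) ^ k * g ∈ m := by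
  induction k with
  | zero => intro g; simp
  | succ k ih =>
    intro g
    have e : D (f ^ (k + 1) * g) = f ^ k * (((k : A) + 1) * D f * g + f * D g) := by
      rw [Derivation.leibniz, Derivation.leibniz_pow]
      simp only [smul_eq_mul, nsmul_eq_mul, Nat.add_sub_cancel]
      push_cast
      ring
    rw [Function.iterate_succ_apply, e]
    have h1 := ih (((k : A) + 1) * D f * g + f * D g)
    have h2 := m.mul_mem_left ((k.factorial : A) * (D f) ^ k * D g) hf
    have h3 := m.add_mem h1 h2
    convert h3 using 1
    rw [Nat.factorial_succ]
    push_cast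
    ring

/-- Let `A` be a commutative `ℂ`-algebra, `D` a `ℂ`-linear derivation of `A`,
and `m` a radical ideal of `A`.  If `f ∈ m` and `D^[k] (f ^ k) ∈ m` for some `k ≥ 1`, then
`D f ∈ m`. -/
theorem derivation_mem_radical_of_iterate_pow_mem
    {A : Type*} [CommRing A] [Algebra ℂ A]
    (D : Derivation ℂ A A)
    (m : Ideal A) (hm : m.IsRadical)
    (f : A) (hf : f ∈ m)
    (k : ℕ) (hk : 1 ≤ k) (h : (⇑D)^[k] (f ^ k) ∈ m) :
    D f ∈ m := by
  have h1 := iterate_pow_mul_sub_mem D m f hf k 1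
  rw [mul_one, mul_one] at h1
  have h2 : (k.factorial : A) * (D f) ^ k ∈ m := by
    have := m.sub_mem h h1
    rwa [sub_sub_cancel] at this
  apply hm
  refine ⟨k, ?_⟩
  have h3 := m.mul_mem_left (algebraMap ℂ A ((k.factorial : ℂ)⁻¹)) h2
  have h4 : algebraMap ℂ A ((k.factorial : ℂ)⁻¹) * (k.factorial : A) = 1 := by
    rw [← map_natCast (algebraMap ℂ A), ← map_mul, inv_mul_cancel₀, map_one]
    exact_mod_cast k.factorial_ne_zero
  rwa [← mul_assoc, h4, one_mul] at h3
end

section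
/- Let A be a commutative ℂ-algebra, let D_Y : A → A be a ℂ-linear derivation, and let 𝒱 be a ℂ-vector space of ℂ-linear derivations of A such that for every D_W ∈ 𝒱 the commutator [D_W, D_Y] again belongs to 𝒱. Let I be the ideal of A generated by the union of the images D_W(A) over all D_W ∈ 𝒱. Then D_Y maps the radical √I into itself: D_Y(√I) ⊆ √I. (This is the algebraic form of the statement that a vector field normalizing a family of vector fields is tangent to the reduced simultaneous zero scheme of that family.) -/
/-- Let `A` be a commutative `ℂ`-algebra, `DY` a `ℂ`-linear derivation of `A`,
and `V` a `ℂ`-vector space of derivations of `A` such that `⁅DW, DY⁆ ∈ V` for every `DW ∈ V`.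
Let `I` be the ideal generated by the union of the images `DW(A)` over `DW ∈ V`.  Then `DY`
maps the radical `√I` into itself. -/
theorem derivation_normalizer_preserves_radical
    {A : Type*} [CommRing A] [Algebra ℂ A]
    (DY : Derivation ℂ A A) (V : Submodule ℂ (Derivation ℂ A A))
    (hV : ∀ DW ∈ V, ⁅DW, DY⁆ ∈ V)
    (I : Ideal A)
    (hI : I = Ideal.span (⋃ DW ∈ (V : Set (Derivation ℂ A A)), Set.range ⇑DW))
    (f : A) (hf : f ∈ I.radical) :
    DY f ∈ I.radical := by
  have hD : ∀ x ∈ I, DY x ∈ I := by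
    intro x hx
    rw [hI] at hx
    induction hx using Submodule.span_induction with
    | mem x hx =>
      simp only [Set.mem_iUnion, Set.mem_range] at hx
      obtain ⟨W, hW, a, rfl⟩ := hx
      have h1 : ∀ W ∈ V, ∀ a, W a ∈ I := by
        intro W hW a
        rw [hI]
        apply Ideal.subset_span
        simp only [Set.mem_iUnion, Set.mem_range]
        exact ⟨W, hW, a, rfl⟩
      have h2 : DY (W a) = W (DY a) - ⁅W, DY⁆ a := by
        rw [Derivation.commutator_apply]; ring
      rw [h2]
      exact I.sub_mem (h1 W hW _) (h1 _ (hV W hW) _)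
    | zero => simp
    | add x y _ _ h1 h2 => rw [map_add]; exact I.add_mem h1 h2
    | smul a x hx h =>
      replace hx : x ∈ I := by rw [hI]; exact hx
      rw [smul_eq_mul, Derivation.leibniz, smul_eq_mul, smul_eq_mul]
      exact I.add_mem (I.mul_mem_left _ h) (I.mul_mem_right _ hx)
  have key : ∀ m j : ℕ, f ^ m * (DY f) ^ j ∈ I → DY f ∈ I.radical := by
    intro m
    induction m with
    | zero => intro j h; exact ⟨j, by simpa using h⟩
    | succ m ih =>
      intro j h
      apply ih (j + 2)
      have h1 := I.mul_mem_left (DY f) (hD _ h)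
      have h2 := I.mul_mem_left ((j : A) * DY (DY f)) h
      have h3 := I.sub_mem h1 h2
      have h4 : DY f * DY (f ^ (m + 1) * (DY f) ^ j)
          - (j : A) * DY (DY f) * (f ^ (m + 1) * (DY f) ^ j)
          = ((m + 1 : ℕ) : A) * (f ^ m * (DY f) ^ (j + 2)) := by
        rw [Derivation.leibniz, Derivation.leibniz_pow, Derivation.leibniz_pow]
        simp only [smul_eq_mul, nsmul_eq_mul, Nat.add_sub_cancel]
        cases j with
        | zero => simp; ring
        | succ j => simp only [Nat.add_sub_cancel]; ring
      rw [h4] at h3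
      have h5 := I.mul_mem_left (algebraMap ℂ A ((m + 1 : ℕ) : ℂ)⁻¹) h3
      have h6 : algebraMap ℂ A ((m + 1 : ℕ) : ℂ)⁻¹ * ((m + 1 : ℕ) : A) = 1 := by
        rw [← map_natCast (algebraMap ℂ A), ← map_mul,
          inv_mul_cancel₀ (Nat.cast_ne_zero.mpr (Nat.succ_ne_zero m)), map_one]
      rwa [← mul_assoc, h6, one_mul] at h5
  obtain ⟨n, hn⟩ := hf
  exact key n 0 (by simpa using hn)
end

section
/- Let 𝔟 be a finite-dimensional complex Lie algebra and let h, e ∈ 𝔟 satisfy ⁅h,e⁆ = 2e. Suppose ad(h) : 𝔟 → 𝔟 is diagonalizable, and suppose 𝔟 = 𝔱 ⊕ 𝔲 is a direct sum of two ℂ-subspaces, each invariant under ad(h), such that ⁅h,x⁆ = 0 for all x ∈ 𝔱 and such that the image of ad(e) equals 𝔲, i.e. ⁅e,𝔟⁆ = 𝔲. Then every eigenvalue of the restriction of ad(h) to 𝔲 is a positive even integer. -/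
theorem aux_sup {V : Type*} [AddCommGroup V] [Module ℂ V]
    (f : Module.End ℂ V) (hdiag : ⨆ μ : ℂ, Module.End.eigenspace f μ = ⊤) (c : ℂ) :
    LinearMap.ker (f - c • (1 : Module.End ℂ V)) ⊔
      LinearMap.range (f - c • (1 : Module.End ℂ V)) = ⊤ := by
  rw [eq_top_iff, ← hdiag]
  refine iSup_le fun ν => ?_
  intro v hv
  rw [Module.End.mem_eigenspace_iff] at hv
  by_cases hc : ν = c
  · apply Submodule.mem_sup_left
    simp [hv, hc]
  · apply Submodule.mem_sup_right
    refine ⟨(ν - c)⁻¹ • v, ?_⟩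
    have : ν - c ≠ 0 := sub_ne_zero.mpr hc
    rw [map_smul]
    simp only [LinearMap.sub_apply, LinearMap.smul_apply, Module.End.one_apply, hv]
    rw [← sub_smul, smul_smul, inv_mul_cancel₀ this, one_smul]

theorem aux_disj {V : Type*} [AddCommGroup V] [Module ℂ V] [FiniteDimensional ℂ V]
    (g : Module.End ℂ V) (hs : LinearMap.ker g ⊔ LinearMap.range g = ⊤) :
    LinearMap.ker g ⊓ LinearMap.range g = ⊥ := by
  have h1 := Submodule.finrank_sup_add_finrank_inf_eq (LinearMap.ker g) (LinearMap.range g)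
  have h2 := LinearMap.finrank_range_add_finrank_ker g
  rw [hs, finrank_top] at h1
  apply Submodule.finrank_eq_zero.mp
  omega

/-- Let `𝔟` be a finite-dimensional complex Lie algebra, `h, e ∈ 𝔟` with
`⁅h, e⁆ = 2 e`.  Suppose `ad h` is diagonalizable and `𝔟 = 𝔱 ⊕ 𝔲` with both summands
invariant under `ad h`, `⁅h, 𝔱⁆ = 0` and `⁅e, 𝔟⁆ = 𝔲`.  Then every eigenvalue of `ad h`
restricted to `𝔲` is a positive even integer. -/
theorem eigenvalues_of_adH_on_image_of_adE_positive_even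
    {B : Type*} [LieRing B] [LieAlgebra ℂ B] [FiniteDimensional ℂ B]
    (h e : B) (hhe : ⁅h, e⁆ = (2 : ℂ) • e)
    (hdiag : ⨆ μ : ℂ, Module.End.eigenspace (LieAlgebra.ad ℂ B h) μ = ⊤)
    (t u : Submodule ℂ B) (hcompl : IsCompl t u)
    (ht_inv : ∀ x ∈ t, ⁅h, x⁆ ∈ t)
    (ht : ∀ x ∈ t, ⁅h, x⁆ = 0)
    (hu : ∀ x ∈ u, ⁅h, x⁆ ∈ u)
    (hrange : LinearMap.range (LieAlgebra.ad ℂ B e) = u)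
    (μ : ℂ) (x : B) (hx : x ∈ u) (hx0 : x ≠ 0) (heig : ⁅h, x⁆ = μ • x) :
    ∃ n : ℕ, 0 < n ∧ μ = 2 * n := by
  have step : ∀ (c : ℂ) (x : B), x ∈ u → x ≠ 0 → ⁅h, x⁆ = c • x → c ≠ 2 →
      ∃ y : B, y ∈ u ∧ y ≠ 0 ∧ ⁅h, y⁆ = (c - 2) • y := by
    intro c x hx hx0 heig hc
    rw [← hrange] at hx
    obtain ⟨z, hz⟩ := hx
    rw [LieAlgebra.ad_apply] at hz
    have hzt : z ∈ (⊤ : Submodule ℂ B) := trivial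
    rw [← aux_sup _ hdiag (c - 2)] at hzt
    obtain ⟨y, hy, w', ⟨w, rfl⟩, hyw⟩ := Submodule.mem_sup.mp hzt
    have hy' : ⁅h, y⁆ = (c - 2) • y := by
      simpa [sub_eq_zero] using hy
    have hy0 : y ≠ 0 := by
      rintro rfl
      have hd := aux_disj _ (aux_sup _ hdiag c)
      have : x ∈ (⊥ : Submodule ℂ B) := by
        rw [← hd]
        refine ⟨by simp [heig], ⁅e, w⁆, ?_⟩
        rw [← hz, ← hyw]
        have hl : ⁅h, ⁅e, w⁆⁆ = (2 : ℂ) • ⁅e, w⁆ + ⁅e, ⁅h, w⁆⁆ := by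
          rw [leibniz_lie, hhe, smul_lie]
        simp only [LinearMap.sub_apply, LinearMap.smul_apply, Module.End.one_apply,
          LieAlgebra.ad_apply, zero_add, lie_sub, lie_smul, hl]
        module
      exact hx0 (by simpa using this)
    refine ⟨y, ?_, hy0, hy'⟩
    have hyt : y ∈ t ⊔ u := by rw [hcompl.sup_eq_top]; trivial
    obtain ⟨a, ha, b, hb, hab⟩ := Submodule.mem_sup.mp hyt
    have h3 : (c - 2) • y ∈ u := by
      rw [← hy', ← hab, lie_add, ht a ha, zero_add]
      exact hu b hb
    exact (Submodule.smul_mem_iff u (sub_ne_zero.mpr hc)).mp h3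
  by_contra hno
  push Not at hno
  have all : ∀ k : ℕ, ∃ y : B, y ∈ u ∧ y ≠ 0 ∧ ⁅h, y⁆ = (μ - 2 * k) • y := by
    intro k
    induction k with
    | zero => exact ⟨x, hx, hx0, by simpa using heig⟩
    | succ k ih =>
      obtain ⟨y, hy, hy0, hye⟩ := ih
      obtain ⟨y', h1, h2, h3⟩ := step _ y hy hy0 hye (by
        intro hk
        apply hno (k + 1) (Nat.succ_pos k)
        push_cast
        linear_combination hk)
      refine ⟨y', h1, h2, ?_⟩
      rw [h3]
      congr 1
      push_cast
      ring
  have hfin := Module.End.finite_hasEigenvalue (LieAlgebra.ad ℂ B h)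
  refine Set.infinite_of_injective_forall_mem (f := fun k : ℕ => μ - 2 * (k : ℂ)) ?_ ?_ hfin
  · intro a b hab
    simpa using hab
  · intro k
    obtain ⟨y, -, hy0, hye⟩ := all k
    exact Module.End.hasEigenvalue_of_hasEigenvector
      ⟨Module.End.mem_eigenspace_iff.mpr hye, hy0⟩
end

section
/- Let K be a field, let 𝔥 be a finite-dimensional Lie algebra over K, let 𝔫 ⊆ 𝔥 be a Lie ideal and 𝔩 ⊆ 𝔥 a Lie subalgebra such that 𝔥 = 𝔫 ⊕ 𝔩 as K-vector spaces. Let e ∈ 𝔥 and write e = e_n + e_l with e_n ∈ 𝔫 and e_l ∈ 𝔩. Then the dimension of the centralizer of e_l in 𝔩 is at most the dimension of the centralizer of e in 𝔥, i.e. dim_K {x ∈ 𝔩 : ⁅e_l,x⁆ = 0} ≤ dim_K {x ∈ 𝔥 : ⁅e,x⁆ = 0}. (In particular, if e is a regular element of the Lie algebra 𝔥 of a principally paired group 𝔥 = 𝔫 ⊕ 𝔩 with 𝔫 the nilradical and 𝔩 a Levi subalgebra, then e_l is a regular element of 𝔩.) -/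
/-- Let `K` be a field, `𝔥` a finite-dimensional Lie algebra over `K`,
`𝔫 ⊆ 𝔥` a Lie ideal and `𝔩 ⊆ 𝔥` a Lie subalgebra with `𝔥 = 𝔫 ⊕ 𝔩` as `K`-vector spaces.
If `e = e_n + e_l` with `e_n ∈ 𝔫`, `e_l ∈ 𝔩`, then the centralizer of `e_l` in `𝔩` has
dimension at most that of the centralizer of `e` in `𝔥`. -/
theorem finrank_centralizer_levi_component_le
    {K : Type*} [Field K] {H : Type*} [LieRing H] [LieAlgebra K H]
    [FiniteDimensional K H]
    (N : LieIdeal K H) (L : LieSubalgebra K H)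
    (hcompl : IsCompl (N : Submodule K H) L.toSubmodule)
    (e en el : H) (hen : en ∈ N) (hel : el ∈ L) (he : e = en + el) :
    Module.finrank K ↥(L.toSubmodule ⊓ LinearMap.ker (LieAlgebra.ad K H el)) ≤
      Module.finrank K ↥(LinearMap.ker (LieAlgebra.ad K H e)) := by
  set C : Submodule K H := L.toSubmodule ⊓ LinearMap.ker (LieAlgebra.ad K H el) with hC
  set M : Submodule K H := (N : Submodule K H) with hM
  have hdis : M ⊓ C = ⊥ := by
    have h1 : M ⊓ L.toSubmodule = ⊥ := hcompl.inf_eq_bot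
    rw [eq_bot_iff, ← h1]
    exact inf_le_inf_left _ inf_le_left
  have hdim := Submodule.finrank_sup_add_finrank_inf_eq M C
  rw [hdis, finrank_bot, add_zero] at hdim
  let f : ↥(M ⊔ C) →ₗ[K] H := (LieAlgebra.ad K H e).domRestrict (M ⊔ C)
  have hrn := LinearMap.finrank_range_add_finrank_ker f
  have hr : LinearMap.range f ≤ M := by
    rintro _ ⟨⟨x, hx⟩, rfl⟩
    obtain ⟨n, hn, c, hc, rfl⟩ := Submodule.mem_sup.mp hx
    have hn' : n ∈ N := hn
    have h0 : ⁅el, c⁆ = 0 := by simpa using hc.2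
    change ⁅e, n + c⁆ ∈ N
    have h2 : ⁅e, n + c⁆ = ⁅e, n⁆ + ⁅en, c⁆ := by
      rw [lie_add]
      congr 1
      rw [he, add_lie, h0, add_zero]
    rw [h2]
    exact add_mem (lie_mem_right K H N e n hn') (lie_mem_left K H N en c hen)
  have hr' := Submodule.finrank_mono hr
  have hk : Module.finrank K (LinearMap.ker f) ≤
      Module.finrank K (LinearMap.ker (LieAlgebra.ad K H e)) := by
    rw [← Submodule.finrank_map_subtype_eq (M ⊔ C) (LinearMap.ker f)]
    apply Submodule.finrank_mono
    rintro _ ⟨x, hx, rfl⟩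
    exact hx
  omega
end

section
/- Let L be a Lie algebra over a field K and let e ∈ L be an element whose adjoint operator ad(e) is nilpotent. Let 𝔱 ⊆ L be a K-linear subspace such that L = 𝔱 + ⁅L,e⁆, i.e. every element of L is the sum of an element of 𝔱 and an element of the image of ad(e). Then the Lie subalgebra of L generated by 𝔱 ∪ {e} is all of L. -/
/-- Let `L` be a Lie algebra over a field `K` and `e ∈ L` with `ad e`
nilpotent.  If `𝔱 ⊆ L` is a `K`-linear subspace with `L = 𝔱 + im (ad e)`, then the Lie
subalgebra of `L` generated by `𝔱 ∪ {e}` is all of `L`. -/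
theorem lieSpan_union_singleton_eq_top_of_sup_range_ad_eq_top
    {K : Type*} [Field K] {L : Type*} [LieRing L] [LieAlgebra K L]
    (e : L) (hnil : IsNilpotent (LieAlgebra.ad K L e))
    (t : Submodule K L)
    (hsum : t ⊔ LinearMap.range (LieAlgebra.ad K L e) = ⊤) :
    LieSubalgebra.lieSpan K L ((t : Set L) ∪ {e}) = ⊤ := by
  set S := LieSubalgebra.lieSpan K L ((t : Set L) ∪ {e}) with hS
  have hsub : ((t : Set L) ∪ {e}) ⊆ S := LieSubalgebra.subset_lieSpan
  have he : e ∈ S := hsub (Or.inr rfl)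
  have hpow : ∀ (n : ℕ) (a : L), a ∈ S → ((LieAlgebra.ad K L e) ^ n) a ∈ S := by
    intro n
    induction n with
    | zero => intro a ha; simpa using ha
    | succ n ih =>
      intro a ha
      rw [pow_succ, Module.End.mul_apply]
      exact ih _ (S.lie_mem he ha)
  have key : ∀ (n : ℕ) (x : L), ∃ s ∈ S, ∃ y : L, s + ((LieAlgebra.ad K L e) ^ n) y = x := by
    intro n x
    induction n with
    | zero => exact ⟨0, S.zero_mem, x, by simp⟩
    | succ n ih =>
      obtain ⟨s, hs, y, rfl⟩ := ih
      have hy : y ∈ t ⊔ LinearMap.range (LieAlgebra.ad K L e) := by rw [hsum]; trivial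
      obtain ⟨a, ha, b, ⟨z, rfl⟩, rfl⟩ := Submodule.mem_sup.mp hy
      refine ⟨s + ((LieAlgebra.ad K L e) ^ n) a,
        S.add_mem hs (hpow n a (hsub (Or.inl ha))), z, ?_⟩
      rw [pow_succ, Module.End.mul_apply, map_add, add_assoc]
  obtain ⟨N, hN⟩ := hnil
  refine eq_top_iff.mpr fun x _ => ?_
  obtain ⟨s, hs, y, rfl⟩ := key N x
  rw [hN]
  simpa using hs
end

section
/- Let k be a field, let Y be a reduced scheme of finite type over k, and let Z be a closed subscheme of Y. Assume that every closed point p of Y is contained in some closed subscheme A of Y which is an integral scheme, projective over k, and whose intersection with Z is nonempty. Then the restriction homomorphism k[Y] → k[Z] on global regular functions is injective. -/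
open AlgebraicGeometry CategoryTheory MvPolynomial

attribute [local instance] MvPolynomial.gradedAlgebra

/-- Projective `n`-space over a field `k`, as `Proj` of the standard graded polynomial ring
`k[X₀, …, Xₙ]`. -/
noncomputable def ProjectiveSpace' (k : Type) [Field k] (n : ℕ) : Scheme :=
  AlgebraicGeometry.Proj (homogeneousSubmodule (Fin (n + 1)) k)

/-- The structure morphism `ℙⁿ_k ⟶ Spec k`. -/
noncomputable def ProjectiveSpace'.toSpec (k : Type) [Field k] (n : ℕ) :
    ProjectiveSpace' k n ⟶ Spec (CommRingCat.of k) :=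
  AlgebraicGeometry.Proj.toSpecZero (homogeneousSubmodule (Fin (n + 1)) k) ≫
    Spec.map (CommRingCat.ofHom
      (algebraMap k ↥(homogeneousSubmodule (Fin (n + 1)) k 0)))

/-- A scheme `A` with structure morphism `g : A ⟶ Spec k` is *projective over `k`* if it
admits a closed immersion into some projective space `ℙⁿ_k` over `Spec k`. -/
def IsProjectiveOverField (k : Type) [Field k] {A : Scheme}
    (g : A ⟶ Spec (CommRingCat.of k)) : Prop :=
  ∃ (n : ℕ) (ι : A ⟶ ProjectiveSpace' k n),
    IsClosedImmersion ι ∧ ι ≫ ProjectiveSpace'.toSpec k n = g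

theorem toSpec_universallyClosed (k : Type) [Field k] (n : ℕ) :
    UniversallyClosed (ProjectiveSpace'.toSpec k n) := by
  have h1 : Algebra.FiniteType (homogeneousSubmodule (Fin (n + 1)) k 0)
      (MvPolynomial (Fin (n + 1)) k) := by
    have : IsScalarTower k (homogeneousSubmodule (Fin (n + 1)) k 0)
      (MvPolynomial (Fin (n + 1)) k) :=
      IsScalarTower.of_algebraMap_eq (R := k) (S := homogeneousSubmodule (Fin (n + 1)) k 0)
        (A := MvPolynomial (Fin (n + 1)) k) (fun x => by rfl)
    exact Algebra.FiniteType.of_restrictScalars_finiteType k _ _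
  have h2 : IsClosedImmersion (Spec.map (CommRingCat.ofHom
      (algebraMap k ↥(homogeneousSubmodule (Fin (n + 1)) k 0)))) := by
    apply IsClosedImmersion.spec_of_surjective
    rintro ⟨x, hx⟩
    have hx' := hx
    rw [mem_homogeneousSubmodule, ← totalDegree_zero_iff_isHomogeneous,
      totalDegree_eq_zero_iff_eq_C] at hx'
    exact ⟨_, Subtype.ext hx'.symm⟩
  have h3 : UniversallyClosed (Proj.toSpecZero (homogeneousSubmodule (Fin (n + 1)) k)) :=
    inferInstance
  unfold ProjectiveSpace'.toSpec
  exact MorphismProperty.comp_mem _ _ _ h3 inferInstance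

/-- Let `k` be a field, `Y` a reduced scheme of finite type over `k`, and
`Z ⟶ Y` a closed subscheme.  If every closed point `p` of `Y` lies on a closed subscheme
`A ⟶ Y` which is integral, projective over `k`, and meets `Z`, then the restriction map
`k[Y] → k[Z]` on global regular functions is injective. -/
theorem injective_global_sections_restriction_of_projective_connectors
    (k : Type) [Field k] (Y Z : Scheme)
    (f : Y ⟶ Spec (CommRingCat.of k)) [IsReduced Y]
    [LocallyOfFiniteType f] [QuasiCompact f]
    (i : Z ⟶ Y) [IsClosedImmersion i]
    (H : ∀ p : Y, IsClosed ({p} : Set Y) →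
      ∃ (A : Scheme) (j : A ⟶ Y), IsClosedImmersion j ∧ IsIntegral A ∧
        IsProjectiveOverField k (j ≫ f) ∧ p ∈ Set.range j.base ∧
        (Set.range j.base ∩ Set.range i.base).Nonempty) :
    Function.Injective (i.app ⊤) := by
  have hJ : JacobsonSpace Y := LocallyOfFiniteType.jacobsonSpace f
  rw [injective_iff_map_eq_zero (i.app ⊤).hom]
  intro s hs
  apply eq_zero_of_basicOpen_eq_bot
  by_contra hne
  have hne' : ((Y.basicOpen s : Y.Opens) : Set Y).Nonempty := by
    rw [Set.nonempty_iff_ne_empty]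
    intro h
    exact hne (TopologicalSpace.Opens.ext h)
  obtain ⟨p, hp, hpc⟩ := nonempty_inter_closedPoints hne' (Y.basicOpen s).2.isLocallyClosed
  obtain ⟨A, j, hj, hA, ⟨n, ι, hι, hcomp⟩, ⟨a, rfl⟩, ⟨q, ⟨b, rfl⟩, ⟨z, hz⟩⟩⟩ := H p hpc
  have huc : UniversallyClosed (j ≫ f) := by
    rw [← hcomp]
    have := toSpec_universallyClosed k n
    exact MorphismProperty.comp_mem _ _ _ inferInstance this
  have hF := isField_of_universallyClosed k (j ≫ f)
  have hpre := Scheme.preimage_basicOpen_top j s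
  have hne0 : j.appTop s ≠ 0 := by
    intro h0
    rw [h0, Scheme.basicOpen_zero] at hpre
    have : a ∈ j ⁻¹ᵁ Y.basicOpen s := hp
    rw [hpre] at this
    exact this
  obtain ⟨t, ht⟩ := hF.mul_inv_cancel hne0
  rw [Scheme.basicOpen_of_isUnit _ (IsUnit.of_mul_eq_one _ ht)] at hpre
  have hb : b ∈ j ⁻¹ᵁ Y.basicOpen s := by rw [hpre]; trivial
  have hb' : j.base b ∈ Y.basicOpen s := hb
  rw [← hz] at hb'
  have hz' : z ∈ i ⁻¹ᵁ Y.basicOpen s := hb'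
  have hs' : i.appTop s = 0 := hs
  rw [Scheme.preimage_basicOpen_top, hs', Scheme.basicOpen_zero] at hz'
  exact hz'
end
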